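/- Let n ≥ 1 and ν > 0. Suppose f : ℍⁿ → ℝ is continuous, positive, attains its maximum at the origin, the limit α := lim_{|ζ|_H→∞} |ζ|_H^ν f(ζ) exists and is positive, β := α^{2/ν} f(0)^{−2/ν}, and for every ξ ∈ ℍⁿ there exists λ(ξ) > 0 such that (λ(ξ)/d_H(ξ,ζ))^ν · f(Φ_{ξ,λ(ξ)}^β(ζ)) = f(ζ) for all ζ ∈ ℍⁿ ∖ {ξ}. Then for any ε > 0 there exists C_ε > 0 such that for every ζ ∈ ℍⁿ with |ζ|_H ≥ C_ε, there exists a point ξ* ∈ ℍⁿ with Φ_{ξ*,λ(ξ*)}^β(ζ) = 0 and |ξ*|_H ≤ ε. -/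

import Mathlib

open Complex Filter Topology MeasureTheory

noncomputable section

/-- The Heisenberg group ℍⁿ as ℂⁿ × ℝ. -/
abbrev Heis (n : ℕ) := (Fin n → ℂ) × ℝ

namespace Heis

variable {n : ℕ}

/-- Hermitian inner product ⟨z,z'⟩ = Σ_j z_j conj(z'_j). -/
def hermInner (z w : Fin n → ℂ) : ℂ := ∑ j, z j * (starRingEnd ℂ) (w j)

/-- Squared Euclidean norm |z|² = Σ_j |z_j|². -/
def nsq (z : Fin n → ℂ) : ℝ := ∑ j, Complex.normSq (z j)

/-- Group law (z,t)·(z',t') = (z+z', t+t'+2 Im⟨z,z'⟩). -/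
def hmul (a b : Heis n) : Heis n :=
  (a.1 + b.1, a.2 + b.2 + 2 * (hermInner a.1 b.1).im)

/-- Group inverse: ζ⁻¹ = −ζ. -/
def hinv (a : Heis n) : Heis n := (-a.1, -a.2)

/-- Korányi norm |(z,t)|_H = (|z|⁴ + t²)^{1/4}. -/
def korNorm (a : Heis n) : ℝ := ((nsq a.1) ^ 2 + a.2 ^ 2) ^ ((1 : ℝ)/4)

/-- Korányi distance d_H(ξ,ζ) = |ζ⁻¹·ξ|_H. -/
def dH (a b : Heis n) : ℝ := korNorm (hmul (hinv b) a)

/-- Open Korányi ball B_λ(ξ). -/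
def ball (ξ : Heis n) (lam : ℝ) : Set (Heis n) := {ζ | dH ξ ζ < lam}

/-- Left translation τ_ξ. -/
def tau (ξ ζ : Heis n) : Heis n := hmul ξ ζ

/-- Dilation δ_λ(z,t) = (λz, λ²t). -/
def dil (lam : ℝ) (a : Heis n) : Heis n := (fun j => (lam : ℂ) * a.1 j, lam ^ 2 * a.2)

/-- Rotation ρ_M(z,t) = (Mz,t). -/
def rot (M : Matrix (Fin n) (Fin n) ℂ) (a : Heis n) : Heis n := (M.mulVec a.1, a.2)

/-- Inversion ι(z,t) = (conj z, −t). -/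
def iota (a : Heis n) : Heis n := (fun j => (starRingEnd ℂ) (a.1 j), -a.2)

/-- w = t + i|z|². -/
def wC (a : Heis n) : ℂ := (a.2 : ℂ) + Complex.I * ((nsq a.1 : ℝ) : ℂ)

/-- CR inversion 𝒥(z,t) = (z/w, −t/|w|²). -/
def crInv (a : Heis n) : Heis n :=
  (fun j => a.1 j / wC a, -a.2 / Complex.normSq (wC a))

/-- Angles θ_k for the rotation matrix M_{ξ,β}. -/
def theta (ξ : Heis n) (β : ℝ) (k : Fin n) : ℝ :=
  if ξ.1 k ≠ 0 then 2 * (ξ.1 k).arg + (wC ξ + Complex.I * (β : ℂ)).arg else 0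

/-- The unitary diagonal matrix M_{ξ,β} = diag(e^{iθ₁},…,e^{iθₙ}). -/
def Mmat (ξ : Heis n) (β : ℝ) : Matrix (Fin n) (Fin n) ℂ :=
  Matrix.diagonal fun k => Complex.exp (Complex.I * ((theta ξ β k : ℝ) : ℂ))

/-- Generalized CR inversion Φ_{ξ,λ}^β = τ_ξ ∘ ρ_{M_{ξ,β}} ∘ δ_{λ²} ∘ 𝒥 ∘ ι ∘ τ_ξ⁻¹. -/
def Phi (ξ : Heis n) (lam β : ℝ) (ζ : Heis n) : Heis n :=
  tau ξ (rot (Mmat ξ β) (dil (lam ^ 2) (crInv (iota (hmul (hinv ξ) ζ)))))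

/-- Direction of the vector field X_j at p. -/
def XVec (j : Fin n) (p : Heis n) : Heis n := (Pi.single j (1 : ℂ), 2 * (p.1 j).im)

/-- Direction of the vector field Y_j at p. -/
def YVec (j : Fin n) (p : Heis n) : Heis n := (Pi.single j Complex.I, -2 * (p.1 j).re)

/-- The vector field X_j acting on functions. -/
def Xop (j : Fin n) (u : Heis n → ℝ) (p : Heis n) : ℝ := fderiv ℝ u p (XVec j p)

/-- The vector field Y_j acting on functions. -/
def Yop (j : Fin n) (u : Heis n → ℝ) (p : Heis n) : ℝ := fderiv ℝ u p (YVec j p)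

/-- Sub-Laplacian Δ_H = Σ_j (X_j² + Y_j²). -/
def subLap (u : Heis n → ℝ) (p : Heis n) : ℝ :=
  ∑ j, (Xop j (Xop j u) p + Yop j (Yop j u) p)

/-- Squared length of the horizontal gradient |∇_H u|² = Σ_j ((X_j u)² + (Y_j u)²). -/
def gradHSq (u : Heis n → ℝ) (p : Heis n) : ℝ :=
  ∑ j, ((Xop j u p) ^ 2 + (Yop j u p) ^ 2)

/-- Generalized Kelvin transform u_{ξ,λ}^β(η) = (λ/d_H(η,ξ))^{Q−2} u(Φ_{ξ,λ}^β(η)), Q−2 = 2n. -/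
def kelvin (u : Heis n → ℝ) (ξ : Heis n) (lam β : ℝ) (η : Heis n) : ℝ :=
  (lam / dH η ξ) ^ (2 * n) * u (Phi ξ lam β η)

/-- The filter |ζ|_H → ∞ on ℍⁿ. -/
def atInftyH (n : ℕ) : Filter (Heis n) := Filter.comap korNorm Filter.atTop

end Heis

open Heis

/-!
Each `Φ_{ξ,λ}` is an involution, so `Φ_{ξ,λ}(ζ) = 0` says `Φ_{ξ,λ}(0) = ζ`. The value of
`t + i|z|²` at `Φ_{ξ,λ}(0)` depends only on `λ` and on `w = t' + i|z'|²`, where `ξ = (z',t')`, and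
the `ℂⁿ`-component of `Φ_{ξ,λ}(0)` is a multiple `(1 - q) z'` with `q` again a function of `λ` and
`w`. Solving for `ξ` is therefore a scalar problem. After multiplication by `w` it reads
`W w = N(λ, w)`, where `W` is the value of `t + i|z|²` at `ζ` and `N` is smooth for `|w| < |β|`. For
large `W` the map `w ↦ N(λ, w) / W` is a contraction, and its fixed point gives a continuous curve
`λ ↦ ξ(λ)` of centres near the origin with `Φ_{ξ(λ),λ}(ζ) = 0`.

Letting `ζ → ∞` in the symmetry relation yields `λ(ξ)^ν f(ξ) = α`, so `ξ ↦ λ(ξ)` is continuous.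
Near the origin it takes values close to `λ(0)`, and the intermediate value theorem produces `l`
with `λ(ξ(l)) = l`; the point sought is `ξ* = ξ(l)`.
-/

theorem exists_lipschitzOnWith_fixedPoint {X Y : Type*} [PseudoMetricSpace X] [MetricSpace Y]
    {s : Set X} {t : Set Y} {K : NNReal} {F : X × Y → Y} (ht : IsComplete t) (hne : t.Nonempty)
    (hK : K < 1) (hF : LipschitzOnWith K F (s ×ˢ t)) (hmaps : Set.MapsTo F (s ×ˢ t) t) :
    ∃ y : X → Y, LipschitzOnWith K y s ∧ ∀ x ∈ s, y x ∈ t ∧ F (x, y x) = y x := by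
  obtain ⟨y₀, hy₀⟩ := hne
  have : Nonempty Y := ⟨y₀⟩
  have hex : ∀ x ∈ s, ∃ y ∈ t, F (x, y) = y := fun x hx ↦ by
    have hmaps_x : Set.MapsTo (fun y ↦ F (x, y)) t t := fun y hy ↦ hmaps ⟨hx, hy⟩
    have hcontr : ContractingWith K (hmaps_x.restrict _ t t) := by
      refine ⟨hK, LipschitzWith.of_dist_le_mul fun y y' ↦ ?_⟩
      simpa [Subtype.dist_eq, Prod.dist_eq] using
        hF.dist_le_mul (x, y) ⟨hx, y.2⟩ (x, y') ⟨hx, y'.2⟩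
    obtain ⟨y, hy, hfix, -⟩ := hcontr.exists_fixedPoint' ht hmaps_x hy₀ (edist_ne_top _ _)
    exact ⟨y, hy, hfix⟩
  choose! y hyt hfix using hex
  refine ⟨y, LipschitzOnWith.of_dist_le_mul fun x hx x' hx' ↦ ?_, fun x hx ↦ ⟨hyt x hx, hfix x hx⟩⟩
  have hdist : dist (y x) (y x') ≤ K * max (dist x x') (dist (y x) (y x')) := by
    simpa [hfix x hx, hfix x' hx', Prod.dist_eq] using
      hF.dist_le_mul (x, y x) ⟨hx, hyt x hx⟩ (x', y x') ⟨hx', hyt x' hx'⟩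
  rcases le_total (dist (y x) (y x')) (dist x x') with h | h
  · rwa [max_eq_left h] at hdist
  · rw [max_eq_right h] at hdist
    have hzero : dist (y x) (y x') = 0 := by
      nlinarith [dist_nonneg (x := y x) (y := y x'), NNReal.coe_lt_one.2 hK]
    rw [hzero]
    positivity

theorem eventually_cobounded_exists_continuousOn_mul_eq {X 𝕜 : Type*} [PseudoMetricSpace X]
    [NormedField 𝕜] [ProperSpace 𝕜] {s : Set X} (hs : IsCompact s) {r : ℝ} (hr : 0 < r)
    {N : X × 𝕜 → 𝕜} (hN : LocallyLipschitzOn (s ×ˢ Metric.closedBall 0 r) N) :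
    ∀ᶠ W in Bornology.cobounded 𝕜, ∃ w : X → 𝕜, ContinuousOn w s ∧
      ∀ x ∈ s, ‖w x‖ ≤ r ∧ W * w x = N (x, w x) := by
  have hcompact := hs.prod (isCompact_closedBall (0 : 𝕜) r)
  obtain ⟨K, hK⟩ := hN.exists_lipschitzOnWith_of_compact hcompact
  obtain ⟨M, hM⟩ := hcompact.exists_bound_of_continuousOn hN.continuousOn
  filter_upwards [tendsto_norm_cobounded_atTop.eventually_gt_atTop (K : ℝ),
    tendsto_norm_cobounded_atTop.eventually_ge_atTop (M / r)] with W hWK hWM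
  have hW : 0 < ‖W‖ := K.coe_nonneg.trans_lt hWK
  have hlip : LipschitzOnWith (K / ‖W‖₊) (fun p ↦ N p / W) (s ×ˢ Metric.closedBall 0 r) := by
    refine LipschitzOnWith.of_dist_le_mul fun p hp q hq ↦ ?_
    rw [dist_eq_norm, ← sub_div, norm_div, NNReal.coe_div, coe_nnnorm, div_mul_eq_mul_div,
      ← dist_eq_norm]
    gcongr
    exact hK.dist_le_mul p hp q hq
  have hmaps : Set.MapsTo (fun p ↦ N p / W) (s ×ˢ Metric.closedBall 0 r)
      (Metric.closedBall 0 r) := fun p hp ↦ by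
    rw [mem_closedBall_zero_iff, norm_div, div_le_comm₀ hW hr]
    exact (div_le_div_of_nonneg_right (hM p hp) hr.le).trans hWM
  obtain ⟨w, hw, hfix⟩ := exists_lipschitzOnWith_fixedPoint Metric.isClosed_closedBall.isComplete
    ⟨0, Metric.mem_closedBall_self hr.le⟩ ((div_lt_one hW).2 hWK) hlip hmaps
  refine ⟨w, hw.continuousOn, fun x hx ↦ ⟨mem_closedBall_zero_iff.1 (hfix x hx).1, ?_⟩⟩
  rw [mul_comm]
  exact ((div_eq_iff (norm_pos_iff.1 hW)).1 (hfix x hx).2).symm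

namespace Heis

variable {n : ℕ}

lemma wC_re (a : Heis n) : (wC a).re = a.2 := by simp [wC]

lemma wC_im (a : Heis n) : (wC a).im = nsq a.1 := by simp [wC]

lemma ext_wC {a b : Heis n} (h₁ : a.1 = b.1) (hw : wC a = wC b) : a = b :=
  Prod.ext h₁ (by rw [← wC_re, ← wC_re, hw])

lemma normSq_le_nsq (z : Fin n → ℂ) (k : Fin n) : normSq (z k) ≤ nsq z :=
  Finset.single_le_sum (f := fun j ↦ normSq (z j)) (fun _ _ ↦ normSq_nonneg _)
    (Finset.mem_univ k)

lemma nsq_le_norm_wC (a : Heis n) : nsq a.1 ≤ ‖wC a‖ := by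
  simpa only [wC_im] using (le_abs_self _).trans (abs_im_le_norm (wC a))

lemma normSq_fst_le_norm_wC (a : Heis n) (k : Fin n) : normSq (a.1 k) ≤ ‖wC a‖ :=
  (normSq_le_nsq a.1 k).trans (nsq_le_norm_wC a)

lemma fst_eq_zero_of_wC_eq_zero {a : Heis n} (h : wC a = 0) : a.1 = 0 :=
  funext fun k ↦ normSq_eq_zero.1 <|
    le_antisymm (by simpa [h] using normSq_fst_le_norm_wC a k) (normSq_nonneg _)

lemma korNorm_eq_sqrt (a : Heis n) : korNorm a = √‖wC a‖ := by
  have hsq : nsq a.1 ^ 2 + a.2 ^ 2 = ‖wC a‖ ^ 2 := by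
    rw [Complex.sq_norm, normSq_apply, wC_re, wC_im]
    ring
  rw [korNorm, hsq, Real.sqrt_eq_rpow, ← Real.rpow_natCast, ← Real.rpow_mul (norm_nonneg _)]
  norm_num

lemma korNorm_nonneg (a : Heis n) : 0 ≤ korNorm a :=
  korNorm_eq_sqrt a ▸ Real.sqrt_nonneg _

lemma ofReal_nsq (z : Fin n → ℂ) : (nsq z : ℂ) = star z ⬝ᵥ z := by
  simp [nsq, dotProduct, normSq_eq_conj_mul_self]

lemma nsq_smul (c : ℂ) (z : Fin n → ℂ) : nsq (c • z) = normSq c * nsq z := by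
  simp [nsq, Finset.mul_sum]

lemma nsq_mulVec {M : Matrix (Fin n) (Fin n) ℂ} (hM : M ∈ Matrix.unitaryGroup (Fin n) ℂ)
    (z : Fin n → ℂ) : nsq (M.mulVec z) = nsq z := by
  have hM' : M.conjTranspose * M = 1 := Matrix.mem_unitaryGroup_iff'.1 hM
  rw [← ofReal_inj, ofReal_nsq, ofReal_nsq, Matrix.star_mulVec, Matrix.dotProduct_mulVec,
    Matrix.vecMul_vecMul, hM', Matrix.vecMul_one]

lemma hermInner_self (z : Fin n → ℂ) : hermInner z z = nsq z := by
  simp [hermInner, nsq, mul_conj]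

lemma hermInner_smul_left (c : ℂ) (z w : Fin n → ℂ) :
    hermInner (c • z) w = c * hermInner z w := by
  simp [hermInner, Finset.mul_sum, mul_assoc]

lemma hermInner_neg_right (z w : Fin n → ℂ) : hermInner z (-w) = -hermInner z w := by
  simp [hermInner]

lemma conj_hermInner (z w : Fin n → ℂ) :
    (starRingEnd ℂ) (hermInner z w) = hermInner w z := by
  simp [hermInner, mul_comm]

lemma norm_hermInner_sq_le (z w : Fin n → ℂ) : ‖hermInner z w‖ ^ 2 ≤ nsq z * nsq w := by
  have htri : ‖hermInner z w‖ ≤ ∑ j, ‖z j‖ * ‖w j‖ := by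
    simpa [hermInner] using norm_sum_le Finset.univ fun j ↦ z j * (starRingEnd ℂ) (w j)
  calc ‖hermInner z w‖ ^ 2 ≤ (∑ j, ‖z j‖ * ‖w j‖) ^ 2 := by gcongr
    _ ≤ (∑ j, ‖z j‖ ^ 2) * ∑ j, ‖w j‖ ^ 2 := Finset.sum_mul_sq_le_sq_mul_sq _ _ _
    _ = nsq z * nsq w := by simp [nsq, normSq_eq_norm_sq]

lemma hinv_hinv (a : Heis n) : hinv (hinv a) = a := by simp [hinv]

lemma hinv_hmul_cancel_left (a b : Heis n) : hmul (hinv a) (hmul a b) = b := by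
  have him : (hermInner a.1 a.1).im = 0 := by rw [hermInner_self, ofReal_im]
  have hsnd : (hermInner (-a.1) (a.1 + b.1)).im = -(hermInner a.1 b.1).im := by
    have hexpand : hermInner (-a.1) (a.1 + b.1) = -hermInner a.1 a.1 - hermInner a.1 b.1 := by
      simp only [hermInner, Pi.neg_apply, Pi.add_apply, map_add, mul_add, neg_mul,
        Finset.sum_add_distrib, Finset.sum_neg_distrib]
      ring
    rw [hexpand, sub_im, neg_im, him, neg_zero, zero_sub]
  apply Prod.ext
  · simp [hmul, hinv]
  · simp only [hmul, hinv, hsnd]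
    ring

lemma hmul_hinv_cancel_left (a b : Heis n) : hmul a (hmul (hinv a) b) = b := by
  simpa only [hinv_hinv] using hinv_hmul_cancel_left (hinv a) b

lemma hmul_zero (a : Heis n) : hmul a 0 = a := by
  simp [hmul, hermInner]

lemma wC_hmul (a b : Heis n) : wC (hmul a b) = wC a + wC b + 2 * I * hermInner b.1 a.1 := by
  rw [← conj_hermInner]
  apply Complex.ext
  · simp [wC_re, hmul]
  · simp only [hmul, wC_im, nsq, hermInner, add_im, mul_im, re_sum, Finset.mul_sum, Pi.add_apply,
      conj_re, I_re, I_im, re_ofNat, im_ofNat, mul_re, mul_zero, mul_one, zero_mul, sub_zero,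
      zero_add, add_zero, ← Finset.sum_add_distrib]
    refine Finset.sum_congr rfl fun k _ ↦ ?_
    simp only [normSq_apply, add_re, add_im, conj_im]
    ring

lemma wC_hinv (a : Heis n) : wC (hinv a) = -(starRingEnd ℂ) (wC a) := by
  apply Complex.ext <;> simp [wC_re, wC_im, hinv, nsq]

lemma wC_hinv_hmul (a b : Heis n) :
    wC (hmul (hinv a) b) = wC b - (starRingEnd ℂ) (wC a) - 2 * I * hermInner b.1 a.1 := by
  rw [wC_hmul, wC_hinv, hinv, hermInner_neg_right]
  ring

lemma wC_iota (a : Heis n) : wC (iota a) = -(starRingEnd ℂ) (wC a) := by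
  apply Complex.ext <;> simp [wC_re, wC_im, iota, nsq]

lemma wC_crInv (a : Heis n) : wC (crInv a) = -(wC a)⁻¹ := by
  have hfst : (crInv a).1 = (wC a)⁻¹ • a.1 := by
    ext k
    simp [crInv, div_eq_inv_mul]
  apply Complex.ext
  · simp [wC_re, crInv, inv_re, neg_div]
  · rw [wC_im, hfst, nsq_smul, neg_im, inv_im, wC_im, map_inv₀]
    ring

lemma wC_dil (c : ℝ) (a : Heis n) : wC (dil c a) = c ^ 2 * wC a := by
  have hfst : (dil c a).1 = (c : ℂ) • a.1 := rfl
  rw [← ofReal_pow]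
  apply Complex.ext
  · rw [wC_re, re_ofReal_mul, wC_re, dil]
  · rw [wC_im, hfst, nsq_smul, im_ofReal_mul, wC_im, normSq_ofReal]
    ring

lemma wC_rot {M : Matrix (Fin n) (Fin n) ℂ} (hM : M ∈ Matrix.unitaryGroup (Fin n) ℂ)
    (a : Heis n) : wC (rot M a) = wC a := by
  apply Complex.ext
  · simp [wC_re, rot]
  · simp [wC_im, rot, nsq_mulVec hM]

/-- The inversion `ρ_M ∘ δ_c ∘ 𝒥 ∘ ι` centred at the origin; its conjugate by `τ_ξ`, for
`M = M_{ξ,β}` and `c = λ²`, is `Φ_{ξ,λ}^β`. -/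
def originInv (M : Matrix (Fin n) (Fin n) ℂ) (c : ℝ) (a : Heis n) : Heis n :=
  rot M (dil c (crInv (iota a)))

lemma Phi_eq (ξ : Heis n) (l β : ℝ) (ζ : Heis n) :
    Phi ξ l β ζ = hmul ξ (originInv (Mmat ξ β) (l ^ 2) (hmul (hinv ξ) ζ)) := rfl

lemma originInv_fst (M : Matrix (Fin n) (Fin n) ℂ) (c : ℝ) (a : Heis n) :
    (originInv M c a).1 = -(c / (starRingEnd ℂ) (wC a)) • M.mulVec (star a.1) := by
  have hfst : (dil c (crInv (iota a))).1 = -(c / (starRingEnd ℂ) (wC a)) • star a.1 := by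
    ext k
    simp only [dil, crInv, wC_iota]
    simp only [iota, Pi.smul_apply, Pi.star_apply, RCLike.star_def, smul_eq_mul]
    ring
  rw [originInv, rot, hfst, Matrix.mulVec_smul]

lemma wC_originInv {M : Matrix (Fin n) (Fin n) ℂ} (hM : M ∈ Matrix.unitaryGroup (Fin n) ℂ)
    (c : ℝ) (a : Heis n) : wC (originInv M c a) = c ^ 2 / (starRingEnd ℂ) (wC a) := by
  rw [originInv, wC_rot hM, wC_dil, wC_crInv, wC_iota, inv_neg, neg_neg, div_eq_mul_inv]

-- Division by zero makes `originInv M c` fix its centre, so that no point has to be excluded.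
lemma originInv_involutive {M : Matrix (Fin n) (Fin n) ℂ}
    (hM : M ∈ Matrix.unitaryGroup (Fin n) ℂ) (hsymm : M.IsSymm) {c : ℝ} (hc : c ≠ 0) :
    Function.Involutive (originInv M c) := fun a ↦ by
  have hc' : (c : ℂ) ≠ 0 := ofReal_ne_zero.2 hc
  have hstar : ∀ z, M.mulVec (star (M.mulVec z)) = star z := fun z ↦ by
    rw [Matrix.star_mulVec, ← Matrix.vecMul_transpose, hsymm.eq, Matrix.vecMul_vecMul,
      ← Matrix.star_eq_conjTranspose, Matrix.mem_unitaryGroup_iff'.1 hM, Matrix.vecMul_one]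
  apply ext_wC
  · rw [originInv_fst, wC_originInv hM, originInv_fst, star_smul, Matrix.mulVec_smul, hstar,
      star_star, smul_smul]
    rcases eq_or_ne (wC a) 0 with hw | hw
    · rw [fst_eq_zero_of_wC_eq_zero hw, smul_zero]
    · convert one_smul ℂ a.1
      simp only [map_div₀, map_pow, conj_conj, conj_ofReal, star_neg, star_div₀, RCLike.star_def]
      field_simp
  · simp only [wC_originInv hM, map_div₀, map_pow, conj_conj, conj_ofReal]
    field_simp

lemma Mmat_mem_unitaryGroup (ξ : Heis n) (β : ℝ) : Mmat ξ β ∈ Matrix.unitaryGroup (Fin n) ℂ := by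
  rw [Matrix.mem_unitaryGroup_iff, Matrix.star_eq_conjTranspose, Mmat,
    Matrix.diagonal_conjTranspose, Matrix.diagonal_mul_diagonal, ← Matrix.diagonal_one]
  congr 1
  ext k
  rw [Pi.star_apply, RCLike.star_def, mul_conj, normSq_eq_norm_sq, norm_exp_I_mul_ofReal]
  norm_num

lemma Phi_involutive (ξ : Heis n) {l : ℝ} (hl : l ≠ 0) (β : ℝ) :
    Function.Involutive (Phi ξ l β) := fun ζ ↦ by
  have hinvol := originInv_involutive (Mmat_mem_unitaryGroup ξ β) (Matrix.isSymm_diagonal _)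
    (pow_ne_zero 2 hl)
  rw [Phi_eq, Phi_eq, hinv_hmul_cancel_left, hinvol, hmul_hinv_cancel_left]

/-- The unit complex number `e^{i arg(w + iβ)}`, by which `M_{ξ,β}` twists the reflection
`z ↦ z̄` when `w = t' + i|z'|²` is the value of `wC` at `ξ = (z',t')`. -/
def phase (β : ℝ) (w : ℂ) : ℂ := exp (I * (w + I * β).arg)

lemma norm_phase (β : ℝ) (w : ℂ) : ‖phase β w‖ = 1 := norm_exp_I_mul_ofReal _

lemma Mmat_mulVec_star (ξ : Heis n) (β : ℝ) :
    (Mmat ξ β).mulVec (star ξ.1) = phase β (wC ξ) • ξ.1 := by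
  ext k
  rw [Mmat, Matrix.mulVec_diagonal, Pi.star_apply, RCLike.star_def, Pi.smul_apply, smul_eq_mul]
  rcases eq_or_ne (ξ.1 k) 0 with hk | hk
  · rw [hk, map_zero, mul_zero, mul_zero]
  · have hpolar := norm_mul_exp_arg_mul_I (ξ.1 k)
    have hconj : (starRingEnd ℂ) (ξ.1 k) = ‖ξ.1 k‖ * exp (-((ξ.1 k).arg * I)) := by
      conv_lhs => rw [← hpolar]
      rw [map_mul, conj_ofReal, ← exp_conj, map_mul, conj_ofReal, conj_I, mul_neg]
    have hexp : exp (I * theta ξ β k)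
        = exp ((ξ.1 k).arg * I) ^ 2 * phase β (wC ξ) := by
      rw [theta, if_pos hk, phase, ← exp_nat_mul, ← exp_add]
      push_cast
      ring_nf
    rw [hexp, hconj, exp_neg]
    conv_rhs => rw [← hpolar]
    field_simp

/-- The coefficient `q` for which `Φ_{ξ,l}^β(0)` has `ℂⁿ`-component `(1 - q) z'`, as a function of
`w = t' + i|z'|²`, where `ξ = (z',t')`. -/
def radialCoeff (β l : ℝ) (w : ℂ) : ℂ := l ^ 2 * phase β w / w

/-- The value `wC (Φ_{ξ,l}^β(0))` as a function of `w = wC ξ`. -/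
def originGauge (β l : ℝ) (w : ℂ) : ℂ :=
  w - radialCoeff β l w * (w - (starRingEnd ℂ) w)
    - normSq (radialCoeff β l w) * (starRingEnd ℂ) w

/-- The product `w * originGauge β l w`, which extends smoothly to `w = 0`. -/
def originGaugeNum (β : ℝ) (p : ℝ × ℂ) : ℂ :=
  p.2 ^ 2 - p.1 ^ 2 * phase β p.2 * (p.2 - (starRingEnd ℂ) p.2) - p.1 ^ 4

lemma normSq_radialCoeff (β l : ℝ) (w : ℂ) :
    normSq (radialCoeff β l w) = l ^ 4 / normSq w := by
  rw [normSq_eq_norm_sq, normSq_eq_norm_sq, radialCoeff, norm_div, norm_mul, norm_phase, norm_pow,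
    norm_real, mul_one, div_pow, Real.norm_eq_abs, sq_abs]
  ring

lemma radialCoeff_ne_one {β l : ℝ} {w : ℂ} (hw : ‖w‖ < l ^ 2) : radialCoeff β l w ≠ 1 := by
  intro h
  rcases eq_or_ne w 0 with rfl | hw0
  · simp [radialCoeff] at h
  · rw [radialCoeff, div_eq_one_iff_eq hw0] at h
    have hnorm := congrArg norm h
    rw [norm_mul, norm_phase, mul_one, norm_pow, norm_real, Real.norm_eq_abs, sq_abs] at hnorm
    exact hw.ne' hnorm

lemma mul_originGauge (β l : ℝ) {w : ℂ} (hw : w ≠ 0) :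
    w * originGauge β l w = originGaugeNum β (l, w) := by
  have hw' : (starRingEnd ℂ) w ≠ 0 := (map_ne_zero _).2 hw
  rw [originGauge, normSq_radialCoeff, ofReal_div, ← mul_conj w, radialCoeff, originGaugeNum]
  push_cast
  field_simp

lemma originGauge_im (β l : ℝ) (w : ℂ) :
    (originGauge β l w).im = normSq (1 - radialCoeff β l w) * w.im := by
  simp only [originGauge, normSq_apply, sub_im, sub_re, mul_im, conj_im, conj_re, one_im,
    one_re, ofReal_im, ofReal_re]
  ring

lemma originInv_hinv_fst (ξ : Heis n) (l β : ℝ) :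
    (originInv (Mmat ξ β) (l ^ 2) (hinv ξ)).1 = -radialCoeff β l (wC ξ) • ξ.1 := by
  have hstar : star (hinv ξ).1 = -star ξ.1 := star_neg _
  rw [originInv_fst, wC_hinv, hstar, Matrix.mulVec_neg, Mmat_mulVec_star, map_neg, conj_conj,
    smul_neg, smul_smul, ← neg_smul, radialCoeff]
  congr 1
  push_cast
  ring

lemma Phi_zero_fst (ξ : Heis n) (l β : ℝ) :
    (Phi ξ l β 0).1 = (1 - radialCoeff β l (wC ξ)) • ξ.1 := by
  rw [Phi_eq, hmul_zero, hmul, originInv_hinv_fst, sub_smul, one_smul, neg_smul, sub_eq_add_neg]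

lemma wC_Phi_zero (ξ : Heis n) (l β : ℝ) :
    wC (Phi ξ l β 0) = originGauge β l (wC ξ) := by
  have hnsq : 2 * I * (nsq ξ.1 : ℂ) = wC ξ - (starRingEnd ℂ) (wC ξ) := by
    rw [sub_conj, wC_im]
    push_cast
    ring
  have hnormSq : (normSq (radialCoeff β l (wC ξ)) : ℂ) * (starRingEnd ℂ) (wC ξ)
      = l ^ 4 / wC ξ := by
    rw [normSq_radialCoeff, ofReal_div, ← mul_conj]
    push_cast
    rcases eq_or_ne (wC ξ) 0 with hw | hw
    · simp [hw]
    · have hw' : (starRingEnd ℂ) (wC ξ) ≠ 0 := (map_ne_zero _).2 hw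
      field_simp
  rw [Phi_eq, hmul_zero, wC_hmul, wC_originInv (Mmat_mem_unitaryGroup ξ β), originInv_hinv_fst,
    hermInner_smul_left, hermInner_self, wC_hinv, originGauge, hnormSq, ← hnsq, map_neg, conj_conj]
  push_cast
  ring

/-- The point `ξ` with `wC ξ = w` that `Φ_{·,l}^β(0)` sends to `ζ`, when `w` solves
`originGauge β l w = wC ζ`. -/
def center (β l : ℝ) (w : ℂ) (ζ : Heis n) : Heis n :=
  ((1 - radialCoeff β l w)⁻¹ • ζ.1, w.re)

lemma wC_center {β l : ℝ} {w : ℂ} {ζ : Heis n} (hq : radialCoeff β l w ≠ 1)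
    (hζ : wC ζ = originGauge β l w) : wC (center β l w ζ) = w := by
  have hq' : normSq (1 - radialCoeff β l w) ≠ 0 := (map_ne_zero _).2 (sub_ne_zero.2 hq.symm)
  apply Complex.ext
  · rw [wC_re, center]
  · rw [wC_im, center, nsq_smul, ← wC_im ζ, hζ, originGauge_im, map_inv₀, inv_mul_cancel_left₀ hq']

lemma Phi_center {β l : ℝ} {w : ℂ} {ζ : Heis n} (hl : l ≠ 0) (hq : radialCoeff β l w ≠ 1)
    (hζ : wC ζ = originGauge β l w) : Phi (center β l w ζ) l β ζ = 0 := by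
  have hzero : Phi (center β l w ζ) l β 0 = ζ := by
    apply ext_wC
    · rw [Phi_zero_fst, wC_center hq hζ, center, smul_inv_smul₀ (sub_ne_zero.2 hq.symm)]
    · rw [wC_Phi_zero, wC_center hq hζ, hζ]
  simpa [hzero] using Phi_involutive (center β l w ζ) hl β 0

lemma continuous_wC : Continuous (wC : Heis n → ℂ) := by
  have := continuous_normSq
  unfold wC nsq
  fun_prop

lemma nhds_zero_eq_comap_wC : 𝓝 (0 : Heis n) = comap wC (𝓝 0) := by
  have hzero : wC (0 : Heis n) = 0 := by simp [wC, nsq]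
  refine le_antisymm (continuous_wC.tendsto' 0 0 hzero).le_comap ?_
  have hnorm : Tendsto (fun ξ : Heis n ↦ ‖wC ξ‖) (comap wC (𝓝 0)) (𝓝 0) :=
    tendsto_zero_iff_norm_tendsto_zero.1 tendsto_comap
  have hsqrt : Tendsto (fun ξ : Heis n ↦ √‖wC ξ‖) (comap wC (𝓝 0)) (𝓝 0) := by
    simpa using hnorm.sqrt
  refine (Tendsto.prodMk_nhds (tendsto_pi_nhds.2 fun k ↦ squeeze_zero_norm (fun ξ ↦ ?_) hsqrt)
    (squeeze_zero_norm (fun ξ ↦ ?_) hnorm) :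
    Tendsto (fun ξ : Heis n ↦ (ξ.1, ξ.2)) (comap wC (𝓝 0)) (𝓝 (0, 0)))
  · exact Real.le_sqrt_of_sq_le (normSq_eq_norm_sq (ξ.1 k) ▸ normSq_fst_le_norm_wC ξ k)
  · exact wC_re ξ ▸ abs_re_le_norm (wC ξ)

lemma setOf_korNorm_le_mem_nhds_zero {ε : ℝ} (hε : 0 < ε) :
    {ξ : Heis n | korNorm ξ ≤ ε} ∈ 𝓝 0 := by
  rw [nhds_zero_eq_comap_wC]
  refine ⟨Metric.closedBall 0 (ε ^ 2), Metric.closedBall_mem_nhds _ (by positivity), fun ξ hξ ↦ ?_⟩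
  change korNorm ξ ≤ ε
  rw [korNorm_eq_sqrt, Real.sqrt_le_left hε.le]
  exact mem_closedBall_zero_iff.1 hξ

lemma tendsto_wC_atInftyH : Tendsto wC (atInftyH n) (Bornology.cobounded ℂ) := by
  have hnorm : (fun ζ : Heis n ↦ ‖wC ζ‖) = fun ζ ↦ korNorm ζ ^ 2 :=
    funext fun ζ ↦ by rw [korNorm_eq_sqrt, Real.sq_sqrt (norm_nonneg _)]
  rw [← tendsto_norm_atTop_iff_cobounded, hnorm]
  exact (tendsto_pow_atTop two_ne_zero).comp tendsto_comap

instance atInftyH_neBot : (atInftyH n).NeBot := by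
  refine comap_neBot_iff_frequently.2 (Eventually.frequently ?_)
  filter_upwards [eventually_ge_atTop 0] with x hx
  refine ⟨(0, x ^ 2), ?_⟩
  simp [korNorm_eq_sqrt, wC, nsq, Real.sqrt_sq hx]

lemma isLittleO_hermInner_wC (ξ : Heis n) :
    (fun ζ ↦ hermInner ζ.1 ξ.1) =o[atInftyH n] (wC : Heis n → ℂ) := by
  have hbound : (fun ζ : Heis n ↦ hermInner ζ.1 ξ.1 ^ 2) =O[atInftyH n] wC := by
    refine .of_bound (nsq ξ.1) <| .of_forall fun ζ ↦ ?_
    rw [norm_pow, mul_comm]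
    exact (norm_hermInner_sq_le _ _).trans <|
      mul_le_mul_of_nonneg_right (nsq_le_norm_wC ζ) (Finset.sum_nonneg fun _ _ ↦ normSq_nonneg _)
  have hone : (fun _ ↦ 1 : Heis n → ℂ) =o[atInftyH n] (wC : Heis n → ℂ) :=
    (Asymptotics.isLittleO_const_left_of_ne one_ne_zero).2 <|
      tendsto_norm_atTop_iff_cobounded.2 tendsto_wC_atInftyH
  refine Asymptotics.IsLittleO.of_pow (n := 2) (hbound.trans_isLittleO ?_) two_ne_zero
  have hmul := hone.mul_isBigO (Asymptotics.isBigO_refl wC _)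
  simp only [one_mul, ← sq] at hmul
  exact hmul

lemma isEquivalent_wC_hinv_hmul (ξ : Heis n) :
    Asymptotics.IsEquivalent (atInftyH n) (fun ζ ↦ wC (hmul (hinv ξ) ζ)) wC := by
  have hconst : (fun _ ↦ (starRingEnd ℂ) (wC ξ)) =o[atInftyH n] (wC : Heis n → ℂ) :=
    Asymptotics.isLittleO_const_left.2 <| .inr <|
      tendsto_norm_atTop_iff_cobounded.2 tendsto_wC_atInftyH
  simp only [wC_hinv_hmul]
  exact (Asymptotics.IsEquivalent.refl.sub_isLittleO hconst).sub_isLittleO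
    ((isLittleO_hermInner_wC ξ).const_mul_left (2 * I))

lemma tendsto_wC_hinv_hmul (ξ : Heis n) :
    Tendsto (fun ζ ↦ wC (hmul (hinv ξ) ζ)) (atInftyH n) (Bornology.cobounded ℂ) := by
  rw [← tendsto_norm_atTop_iff_cobounded]
  exact (isEquivalent_wC_hinv_hmul ξ).isBigO_symm.trans_tendsto_norm_atTop
    (tendsto_norm_atTop_iff_cobounded.2 tendsto_wC_atInftyH)

lemma dH_comm (a b : Heis n) : dH a b = dH b a := by
  have hconj : wC (hmul (hinv b) a) = -(starRingEnd ℂ) (wC (hmul (hinv a) b)) := by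
    rw [wC_hinv_hmul, wC_hinv_hmul]
    simp only [map_sub, map_mul, conj_conj, conj_I, conj_ofNat, conj_hermInner]
    ring
  rw [dH, dH, korNorm_eq_sqrt, korNorm_eq_sqrt, hconj, norm_neg, norm_conj]

lemma tendsto_korNorm_div_dH (ξ : Heis n) :
    Tendsto (fun ζ ↦ korNorm ζ / dH ξ ζ) (atInftyH n) (𝓝 1) := by
  have hratio : Tendsto (fun ζ ↦ wC ζ / wC (hmul (hinv ξ) ζ)) (atInftyH n) (𝓝 1) :=
    (Asymptotics.isEquivalent_iff_tendsto_one
      ((tendsto_wC_hinv_hmul ξ).eventually_ne_cobounded 0)).1 (isEquivalent_wC_hinv_hmul ξ).symm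
  have hdist : ∀ ζ, dH ξ ζ = √‖wC (hmul (hinv ξ) ζ)‖ := fun ζ ↦ by
    rw [dH_comm, dH, korNorm_eq_sqrt]
  simpa [hdist, korNorm_eq_sqrt] using hratio.norm.sqrt

lemma tendsto_Phi_atInftyH (ξ : Heis n) (l β : ℝ) :
    Tendsto (Phi ξ l β) (atInftyH n) (𝓝 ξ) := by
  have horigin : Tendsto (fun ζ ↦ originInv (Mmat ξ β) (l ^ 2) (hmul (hinv ξ) ζ)) (atInftyH n)
      (𝓝 0) := by
    rw [nhds_zero_eq_comap_wC, tendsto_comap_iff]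
    simp only [Function.comp_def, wC_originInv (Mmat_mem_unitaryGroup ξ β), div_eq_mul_inv,
      ← map_inv₀]
    have hconj := (continuous_conj.tendsto' 0 0 (map_zero _)).comp
      (tendsto_inv₀_cobounded.comp (tendsto_wC_hinv_hmul ξ))
    simpa using hconj.const_mul _
  have hcont : Continuous (hmul ξ) := by
    unfold hmul hermInner
    fun_prop
  exact (hcont.tendsto' 0 ξ (hmul_zero ξ)).comp horigin

lemma rpow_mul_eq_of_tendsto {f : Heis n → ℝ} {ξ : Heis n} (hf : ContinuousAt f ξ) {ν α : ℝ}
    (hlim : Tendsto (fun ζ ↦ korNorm ζ ^ ν * f ζ) (atInftyH n) (𝓝 α)) {l β : ℝ} (hl : 0 < l)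
    (hsym : ∀ᶠ ζ in atInftyH n, (l / dH ξ ζ) ^ ν * f (Phi ξ l β ζ) = f ζ) :
    l ^ ν * f ξ = α := by
  have hscale : Tendsto (fun ζ ↦ (l * (korNorm ζ / dH ξ ζ)) ^ ν) (atInftyH n) (𝓝 (l ^ ν)) := by
    have hl' : l * 1 ≠ 0 := by simpa using hl.ne'
    simpa using ((tendsto_korNorm_div_dH ξ).const_mul l).rpow_const (p := ν) (.inl hl')
  have hprod := hscale.mul (hf.tendsto.comp (tendsto_Phi_atInftyH ξ l β))
  refine tendsto_nhds_unique (hprod.congr' ?_) hlim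
  filter_upwards [hsym] with ζ hζ
  have hdist : 0 ≤ dH ξ ζ := korNorm_nonneg _
  rw [← hζ, ← mul_assoc, Function.comp_apply, mul_div_left_comm,
    Real.mul_rpow (korNorm_nonneg ζ) (div_nonneg hl.le hdist)]

lemma phase_eq_inv_norm_smul {β : ℝ} {w : ℂ} (h : w + I * β ≠ 0) :
    phase β w = ‖w + I * β‖⁻¹ • (w + I * β) := by
  rw [eq_inv_smul_iff₀ (norm_ne_zero_iff.2 h), phase, mul_comm I ((w + I * β).arg : ℂ), real_smul,
    norm_mul_exp_arg_mul_I]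

lemma contDiffAt_phase {β : ℝ} {w : ℂ} (h : w + I * β ≠ 0) : ContDiffAt ℝ 1 (phase β) w := by
  have hadd : ContDiffAt ℝ 1 (fun v ↦ v + I * β) w := by fun_prop
  refine (((hadd.norm ℝ h).inv (norm_ne_zero_iff.2 h)).smul hadd).congr_of_eventuallyEq ?_
  filter_upwards [hadd.continuousAt.eventually_ne h] with v hv using phase_eq_inv_norm_smul hv

lemma add_I_mul_ne_zero {β : ℝ} {w : ℂ} (hw : ‖w‖ < |β|) : w + I * β ≠ 0 := fun h ↦ by
  rw [eq_neg_of_add_eq_zero_left h] at hw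
  simp at hw

lemma locallyLipschitzOn_originGaugeNum (s : Set ℝ) {β r : ℝ} (hr : r < |β|) :
    LocallyLipschitzOn (s ×ˢ Metric.closedBall 0 r) (originGaugeNum β) := fun p hp ↦ by
  have hp' : p.2 + I * β ≠ 0 := add_I_mul_ne_zero ((mem_closedBall_zero_iff.1 hp.2).trans_lt hr)
  have hphase : ContDiffAt ℝ 1 (fun q : ℝ × ℂ ↦ phase β q.2) p :=
    (contDiffAt_phase hp').comp p contDiffAt_snd
  have hfst : ContDiffAt ℝ 1 (fun q : ℝ × ℂ ↦ (q.1 : ℂ)) p :=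
    (ofRealCLM.contDiff.comp contDiff_fst).contDiffAt
  have hconj : ContDiffAt ℝ 1 (fun q : ℝ × ℂ ↦ (starRingEnd ℂ) q.2) p :=
    (conjCLE.contDiff.comp contDiff_snd).contDiffAt
  have hnum : ContDiffAt ℝ 1 (originGaugeNum β) p := by
    unfold originGaugeNum
    fun_prop
  obtain ⟨K, t, ht, hK⟩ := hnum.exists_lipschitzOnWith
  exact ⟨K, t, mem_nhdsWithin_of_mem_nhds ht, hK⟩

lemma continuousOn_center {s : Set ℝ} {β : ℝ} {w : ℝ → ℂ} (hw : ContinuousOn w s) (ζ : Heis n)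
    (hβ : ∀ l ∈ s, ‖w l‖ < |β|) (hw0 : ∀ l ∈ s, w l ≠ 0)
    (hq : ∀ l ∈ s, radialCoeff β l (w l) ≠ 1) :
    ContinuousOn (fun l ↦ center β l (w l) ζ) s := by
  have hphase : ContinuousOn (fun l ↦ phase β (w l)) s := fun l hl ↦
    (contDiffAt_phase (add_I_mul_ne_zero (hβ l hl))).continuousAt.comp_continuousWithinAt (hw l hl)
  have hcoeff : ContinuousOn (fun l ↦ radialCoeff β l (w l)) s :=
    ((by fun_prop : Continuous fun l : ℝ ↦ (l : ℂ) ^ 2).continuousOn.mul hphase).div hw hw0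
  exact (((continuousOn_const.sub hcoeff).inv₀ fun l hl ↦ sub_ne_zero.2 (hq l hl).symm).smul
    continuousOn_const).prodMk (continuous_re.comp_continuousOn hw)

lemma eventually_exists_continuousOn_center {β a b : ℝ} (hβ : β ≠ 0) (ha : 0 < a)
    {V : Set (Heis n)} (hV : V ∈ 𝓝 0) :
    ∀ᶠ ζ in atInftyH n, ∃ c : ℝ → Heis n, ContinuousOn c (Set.Icc a b) ∧
      ∀ l ∈ Set.Icc a b, c l ∈ V ∧ Phi (c l) l β ζ = 0 := by
  rw [nhds_zero_eq_comap_wC, (Metric.nhds_basis_closedBall.comap _).mem_iff] at hV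
  obtain ⟨δ, hδ, hδV⟩ := hV
  have hmin : 0 < min δ (min |β| (a ^ 2)) := by positivity
  obtain ⟨r, hr, hrmin⟩ := exists_between hmin
  obtain ⟨hrδ, hrβ, hra⟩ : r < δ ∧ r < |β| ∧ r < a ^ 2 := by simpa only [lt_min_iff] using hrmin
  filter_upwards [tendsto_wC_atInftyH.eventually <|
    eventually_cobounded_exists_continuousOn_mul_eq isCompact_Icc hr
      (locallyLipschitzOn_originGaugeNum (Set.Icc a b) hrβ)] with ζ ⟨w, hw, hfix⟩
  have hl0 : ∀ l ∈ Set.Icc a b, l ≠ 0 := fun l hl ↦ (ha.trans_le hl.1).ne'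
  have hw0 : ∀ l ∈ Set.Icc a b, w l ≠ 0 := fun l hl h0 ↦ by
    simpa [h0, originGaugeNum, hl0 l hl] using (hfix l hl).2
  have hq : ∀ l ∈ Set.Icc a b, radialCoeff β l (w l) ≠ 1 := fun l hl ↦
    radialCoeff_ne_one <| ((hfix l hl).1.trans_lt hra).trans_le (by gcongr; exact hl.1)
  have hgauge : ∀ l ∈ Set.Icc a b, wC ζ = originGauge β l (w l) := fun l hl ↦
    mul_left_cancel₀ (hw0 l hl) <| by
      rw [mul_originGauge β l (hw0 l hl), ← (hfix l hl).2, mul_comm]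
  refine ⟨fun l ↦ center β l (w l) ζ,
    continuousOn_center hw ζ (fun l hl ↦ (hfix l hl).1.trans_lt hrβ) hw0 hq, fun l hl ↦
    ⟨hδV ?_, Phi_center (hl0 l hl) (hq l hl) (hgauge l hl)⟩⟩
  rw [Set.mem_preimage, wC_center (hq l hl) (hgauge l hl), mem_closedBall_zero_iff]
  exact (hfix l hl).1.trans hrδ.le

lemma eventually_exists_Phi_eq_zero {β : ℝ} (hβ : β ≠ 0) {lam : Heis n → ℝ} {U : Set (Heis n)}
    (hU : U ∈ 𝓝 0) (hlam : ContinuousOn lam U) (hlam0 : 0 < lam 0) :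
    ∀ᶠ ζ in atInftyH n, ∃ ξ ∈ U, Phi ξ (lam ξ) β ζ = 0 := by
  obtain ⟨a, ha, ha'⟩ := exists_between hlam0
  obtain ⟨b, hb⟩ := exists_gt (lam 0)
  have hV : U ∩ lam ⁻¹' Set.Icc a b ∈ 𝓝 0 :=
    inter_mem hU ((hlam.continuousAt hU).preimage_mem_nhds (Icc_mem_nhds ha' hb))
  filter_upwards [eventually_exists_continuousOn_center (b := b) hβ ha hV] with ζ ⟨c, hc, hcV⟩
  obtain ⟨l, hl, hfix⟩ := exists_mem_Icc_isFixedPt_of_mapsTo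
    (hlam.comp hc fun l hl ↦ (hcV l hl).1.1) (ha'.trans hb).le fun l hl ↦ (hcV l hl).1.2
  have hfix' : lam (c l) = l := hfix
  exact ⟨c l, (hcV l hl).1.1, hfix'.symm ▸ (hcV l hl).2⟩

end Heis

theorem fixed_point_lemma_general {n : ℕ} {ν : ℝ} (hν : ν ≠ 0) {f : Heis n → ℝ}
    (hcont : Continuous f) {α : ℝ} (hα : α ≠ 0)
    (hlim : Tendsto (fun ζ ↦ korNorm ζ ^ ν * f ζ) (atInftyH n) (𝓝 α)) {β : ℝ} (hβ : β ≠ 0)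
    {lam : Heis n → ℝ} (hlam : ∀ ξ, 0 < lam ξ)
    (hsym : ∀ ξ ζ, ζ ≠ ξ → (lam ξ / dH ξ ζ) ^ ν * f (Phi ξ (lam ξ) β ζ) = f ζ) {ε : ℝ}
    (hε : 0 < ε) :
    ∃ C : ℝ, 0 < C ∧ ∀ ζ, C ≤ korNorm ζ → ∃ ξ, Phi ξ (lam ξ) β ζ = 0 ∧ korNorm ξ ≤ ε := by
  have hlamf : ∀ ξ, lam ξ ^ ν * f ξ = α := fun ξ ↦
    rpow_mul_eq_of_tendsto hcont.continuousAt hlim (hlam ξ) <|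
      (tendsto_wC_atInftyH.eventually_ne_cobounded (wC ξ)).mono fun ζ hζ ↦
        hsym ξ ζ (ne_of_apply_ne wC hζ)
  have hf : ∀ ξ, f ξ ≠ 0 := fun ξ ↦ right_ne_zero_of_mul (hlamf ξ ▸ hα)
  have hlam_eq : lam = fun ξ ↦ (α / f ξ) ^ ν⁻¹ := funext fun ξ ↦ by
    rw [← hlamf ξ, mul_div_cancel_right₀ _ (hf ξ), Real.rpow_rpow_inv (hlam ξ).le hν]
  have hlam_cont : Continuous lam := hlam_eq ▸
    (continuous_const.div hcont hf).rpow_const fun ξ ↦ .inl (div_ne_zero hα (hf ξ))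
  have hev := eventually_exists_Phi_eq_zero hβ (setOf_korNorm_le_mem_nhds_zero hε)
    hlam_cont.continuousOn (hlam 0)
  obtain ⟨C, hC, hCζ⟩ := ((atTop_basis' 1).comap korNorm).eventually_iff.1 hev
  refine ⟨C, one_pos.trans_le hC, fun ζ hζ ↦ ?_⟩
  obtain ⟨ξ, hξ, hΦ⟩ := hCζ hζ
  exact ⟨ξ, hΦ, hξ⟩

/-- fixed-point lemma: far points are sent to the origin by
Φ_{ξ*,λ(ξ*)}^β with ξ* close to the origin. -/
theorem fixed_point_lemma (n : ℕ) (hn : 1 ≤ n) (ν : ℝ) (hν : 0 < ν)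
    (f : Heis n → ℝ) (hcont : Continuous f) (hpos : ∀ p, 0 < f p)
    (hmax : ∀ p, f p ≤ f 0)
    (α : ℝ) (hα : 0 < α)
    (hlim : Tendsto (fun ζ => korNorm ζ ^ ν * f ζ) (atInftyH n) (nhds α))
    (β : ℝ) (hβ : β = α ^ (2 / ν) * f 0 ^ (-(2 / ν)))
    (lam : Heis n → ℝ) (hlam : ∀ ξ, 0 < lam ξ)
    (hsym : ∀ ξ : Heis n, ∀ ζ : Heis n, ζ ≠ ξ →
      (lam ξ / dH ξ ζ) ^ ν * f (Phi ξ (lam ξ) β ζ) = f ζ) :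
    ∀ ε : ℝ, 0 < ε → ∃ C : ℝ, 0 < C ∧ ∀ ζ : Heis n, C ≤ korNorm ζ →
      ∃ ξs : Heis n, Phi ξs (lam ξs) β ζ = 0 ∧ korNorm ξs ≤ ε := by
  intro ε hε
  have hβ₀ : β ≠ 0 := by
    rw [hβ]
    exact (mul_pos (Real.rpow_pos_of_pos hα _) (Real.rpow_pos_of_pos (hpos 0) _)).ne'
  exact fixed_point_lemma_general hν.ne' hcont hα.ne' hlim hβ₀ hlam hsym hε
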